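/- arXiv:2604.02005 — 2 statements merged into one kernel-verified Lean document; each statement's English description precedes it below -/
import Mathlib

section
/- Let α be irrational with continued fraction convergent denominators (q_k). Let N ∈ ℕ and ε > 0 satisfy 1/N < 2ε < ‖q_2 α‖, where ‖x‖ denotes the distance of x to the nearest integer. Let K be such that q_K ≤ N < q_{K+1}, and set M := max(εN, min(ε q_{K+1}, N/(2 q_K))). Then ⌊M⌋ ≤ #{n ≤ N : ‖nα‖ < ε} ≤ 32 M. -/
/-- Distance from a real number to the nearest integer. -/
noncomputable def nid (x : ℝ) : ℝ := |x - round x|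

open MeasureTheory Metric
open scoped Finset

/-! Write `‖x‖` for the distance from `x` to the nearest integer, i.e. the norm on the circle
`ℝ ⧸ ℤ`.

Lower bound: the balls of radius `ε / 2` around `0, α, …, N α` have total measure `(N + 1) ε`, so
some point of the circle lies in at least that many of them; subtracting the smallest of the
corresponding indices from the others yields more than `ε N - 1` values of `n`. Moreover
`‖q_K α‖ < 1 / q_{K+1}`, so small multiples of `q_K` are counted as well.

Upper bound: if `|α - r| ≤ 1 / r.den ^ 2`, then `n α` stays at distance at least `1 / (2 r.den)`
from `0` for `0 < n ≤ r.den / 2`, hence the `n` counted in a window of length `r.den / 2` give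
separated points in a ball of radius `ε`, and there are at most `4 r.den ε + 1` of them. Apply this
with `r.den = q_K` and, when `ε q_{K+1}` is the smaller term of the minimum, with
`r.den = q_{K+1}`. -/

section Probability

variable {Ω ι : Type*} [MeasurableSpace Ω]

lemma exists_sum_measureReal_le_card (μ : Measure Ω) [IsProbabilityMeasure μ] {t : Finset ι}
    {s : ι → Set Ω} (hs : ∀ i ∈ t, MeasurableSet (s i)) :
    ∃ u ⊆ t, (⋂ i ∈ u, s i).Nonempty ∧ ∑ i ∈ t, μ.real (s i) ≤ #u := by
  classical
  have integrable_indicator : ∀ i ∈ t, Integrable ((s i).indicator (1 : Ω → ℝ)) μ := fun i hi ↦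
    (integrable_const 1).indicator (hs i hi)
  obtain ⟨x, hx⟩ := exists_integral_le (integrable_finsetSum t integrable_indicator)
  refine ⟨{i ∈ t | x ∈ s i}, Finset.filter_subset _ _, ⟨x, by simp⟩, ?_⟩
  calc ∑ i ∈ t, μ.real (s i)
      = ∫ y, ∑ i ∈ t, (s i).indicator 1 y ∂μ := by
        rw [integral_finsetSum t integrable_indicator]
        exact Finset.sum_congr rfl fun i hi ↦ (integral_indicator_one (hs i hi)).symm
    _ ≤ ∑ i ∈ t, (s i).indicator 1 x := hx
    _ = #{i ∈ t | x ∈ s i} := by simp [Set.indicator_apply]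

end Probability

section ReturnTimes

variable {G : Type*} [SeminormedAddCommGroup G] {g : G} {N : ℕ} {ε : ℝ}

/-- The times `n ∈ [1, N]` at which the orbit of `0` under translation by `g` lies in the open
`ε`-ball around `0`. -/
noncomputable def returnTimes (g : G) (N : ℕ) (ε : ℝ) : Finset ℕ :=
  {n ∈ Finset.Icc 1 N | ‖n • g‖ < ε}

lemma mem_returnTimes {n : ℕ} : n ∈ returnTimes g N ε ↔ (1 ≤ n ∧ n ≤ N) ∧ ‖n • g‖ < ε := by
  simp only [returnTimes, Finset.mem_filter, Finset.mem_Icc]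

lemma card_le_card_returnTimes_add_one {u : Finset ℕ} (hN : ∀ n ∈ u, n ≤ N)
    (hu : ∀ m ∈ u, ∀ n ∈ u, ‖n • g - m • g‖ < ε) : #u ≤ #(returnTimes g N ε) + 1 := by
  obtain rfl | hne := u.eq_empty_or_nonempty
  · simp
  set m := u.min' hne
  have hm : m ∈ u := u.min'_mem hne
  have hle : ∀ n ∈ u, m ≤ n := fun n hn ↦ u.min'_le n hn
  have maps_to : ∀ n ∈ u.erase m, n - m ∈ returnTimes g N ε := fun n hn ↦ by
    obtain ⟨hnm, hn⟩ := Finset.mem_erase.1 hn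
    have hmn := (hle n hn).lt_of_ne hnm.symm
    refine mem_returnTimes.2 ⟨⟨by lia, (Nat.sub_le _ _).trans (hN n hn)⟩, ?_⟩
    rw [sub_nsmul g hmn.le, ← sub_eq_add_neg]
    exact hu m hm n hn
  have inj_on : Set.InjOn (· - m) (u.erase m : Set ℕ) := fun a ha b hb hab ↦
    tsub_left_inj (hle a (Finset.mem_of_mem_erase ha)) (hle b (Finset.mem_of_mem_erase hb)) |>.1 hab
  rw [← Finset.card_erase_add_one hm]
  exact Nat.add_le_add_right (Finset.card_le_card_of_injOn _ maps_to inj_on) 1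

lemma le_card_returnTimes {Q T : ℕ} (hQ : 0 < Q) (hN : T * Q ≤ N) (hε : T * ‖Q • g‖ < ε) :
    T ≤ #(returnTimes g N ε) := by
  have maps_to : ∀ j ∈ Finset.Icc 1 T, j * Q ∈ returnTimes g N ε := fun j hj ↦ by
    obtain ⟨hj1, hjT⟩ := Finset.mem_Icc.1 hj
    refine mem_returnTimes.2 ⟨⟨Nat.mul_pos hj1 hQ, (Nat.mul_le_mul_right Q hjT).trans hN⟩, ?_⟩
    calc ‖(j * Q) • g‖ = ‖j • Q • g‖ := by rw [mul_nsmul']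
      _ ≤ j * ‖Q • g‖ := norm_nsmul_le
      _ ≤ T * ‖Q • g‖ := by gcongr
      _ < ε := hε
  simpa using Finset.card_le_card_of_injOn _ maps_to
    fun a _ b _ hab ↦ Nat.eq_of_mul_eq_mul_right hQ hab

lemma floor_min_le_card_returnTimes {Q : ℕ} {R : ℝ} (hε : 0 < ε) (hQ : 0 < Q) (hR : 0 ≤ R)
    (hg : R * ‖Q • g‖ < 1) : ⌊min (ε * R) (N / Q)⌋ ≤ (#(returnTimes g N ε) : ℤ) := by
  have hmin : 0 ≤ min (ε * R) (N / Q) := by positivity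
  rw [← Int.natCast_floor_eq_floor hmin, Nat.cast_le]
  have hT := Nat.floor_le hmin
  set T := ⌊min (ε * R) (N / Q)⌋₊
  refine le_card_returnTimes hQ ?_ ?_
  · have : (T : ℝ) * Q ≤ N := (le_div_iff₀ (by positivity)).1 (hT.trans (min_le_right _ _))
    exact_mod_cast this
  · calc (T : ℝ) * ‖Q • g‖ ≤ ε * R * ‖Q • g‖ := by gcongr; exact hT.trans (min_le_left _ _)
      _ = ε * (R * ‖Q • g‖) := mul_assoc _ _ _
      _ < ε := mul_lt_of_lt_one_right hε hg

end ReturnTimes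

section Haar

variable {G : Type*} [NormedAddCommGroup G] [MeasurableSpace G] [BorelSpace G]
  (μ : Measure G) [μ.IsAddHaarMeasure]

lemma mul_measureReal_ball_le_card_returnTimes_add_one [IsProbabilityMeasure μ]
    (g : G) (N : ℕ) (ε : ℝ) :
    (N + 1) * μ.real (ball 0 (ε / 2)) ≤ #(returnTimes g N ε) + 1 := by
  obtain ⟨u, huN, ⟨x, hx⟩, hu⟩ := exists_sum_measureReal_le_card μ
    (t := Finset.range (N + 1)) (s := fun n ↦ ball (n • g) (ε / 2)) fun _ _ ↦ measurableSet_ball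
  have hdist : ∀ n ∈ u, dist x (n • g) < ε / 2 := by simpa using hx
  have hcard : #u ≤ #(returnTimes g N ε) + 1 := by
    refine card_le_card_returnTimes_add_one
      (fun n hn ↦ Nat.lt_succ_iff.1 (Finset.mem_range.1 (huN hn))) fun m hm n hn ↦ ?_
    rw [← dist_eq_norm]
    linarith [dist_triangle_left (n • g) (m • g) x, hdist m hm, hdist n hn]
  calc (N + 1) * μ.real (ball 0 (ε / 2))
      = ∑ n ∈ Finset.range (N + 1), μ.real (ball (n • g) (ε / 2)) := by
        simp [μ.addHaar_real_ball_center]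
    _ ≤ #u := hu
    _ ≤ #(returnTimes g N ε) + 1 := mod_cast hcard

lemma card_mul_measureReal_ball_le [IsFiniteMeasure μ] {ι : Type*} {s : Finset ι} {f : ι → G}
    {δ ε : ℝ} (hf : ∀ i ∈ s, ‖f i‖ < ε)
    (hsep : (s : Set ι).Pairwise fun i j ↦ δ ≤ ‖f i - f j‖) :
    #s * μ.real (ball 0 (δ / 2)) ≤ μ.real (ball 0 (ε + δ / 2)) := by
  have disjoint_balls : (s : Set ι).PairwiseDisjoint fun i ↦ ball (f i) (δ / 2) :=
    fun i hi j hj hij ↦ ball_disjoint_ball <| by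
      rw [add_halves, dist_eq_norm]
      exact hsep hi hj hij
  calc #s * μ.real (ball 0 (δ / 2)) = ∑ i ∈ s, μ.real (ball (f i) (δ / 2)) := by
        simp [μ.addHaar_real_ball_center]
    _ = μ.real (⋃ i ∈ s, ball (f i) (δ / 2)) :=
        (measureReal_biUnion_finset disjoint_balls fun _ _ ↦ measurableSet_ball).symm
    _ ≤ μ.real (ball 0 (ε + δ / 2)) := by
        refine measureReal_mono (Set.iUnion₂_subset fun i hi ↦ ball_subset_ball' ?_)
        rw [dist_zero_right]
        linarith [hf i hi]

end Haar

section Circle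

variable {N : ℕ} {ε : ℝ}

instance isProbabilityMeasure_unitAddCircle :
    IsProbabilityMeasure (volume : Measure UnitAddCircle) :=
  ⟨UnitAddCircle.measure_univ⟩

lemma measureReal_unitAddCircle_ball (x : UnitAddCircle) {r : ℝ} (hr : 0 ≤ r) :
    (volume : Measure UnitAddCircle).real (ball x r) = min 1 (2 * r) := by
  rw [measureReal_congr AddCircle.closedBall_ae_eq_ball.symm, measureReal_def,
    AddCircle.volume_closedBall, ENNReal.toReal_ofReal (by positivity)]

lemma floor_mul_le_card_returnTimes (x : UnitAddCircle) (N : ℕ) (hε : 0 < ε) (hε1 : ε ≤ 1) :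
    ⌊ε * N⌋ ≤ (#(returnTimes x N ε) : ℤ) := by
  have hcard := mul_measureReal_ball_le_card_returnTimes_add_one volume x N ε
  rw [measureReal_unitAddCircle_ball 0 (by positivity), mul_div_cancel₀ ε two_ne_zero,
    min_eq_right hε1] at hcard
  rw [← Int.lt_add_one_iff, Int.floor_lt]
  push_cast
  linarith

lemma card_le_of_separated_unitAddCircle {ι : Type*} {s : Finset ι} {f : ι → UnitAddCircle}
    {δ : ℝ} (hδ : 0 < δ) (hδ1 : δ ≤ 1) (hε : 0 ≤ ε) (hf : ∀ i ∈ s, ‖f i‖ < ε)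
    (hsep : (s : Set ι).Pairwise fun i j ↦ δ ≤ ‖f i - f j‖) : #s ≤ 2 * ε / δ + 1 := by
  have hpack := card_mul_measureReal_ball_le volume hf hsep
  rw [measureReal_unitAddCircle_ball 0 (by positivity), mul_div_cancel₀ δ two_ne_zero,
    min_eq_right hδ1, measureReal_unitAddCircle_ball 0 (by positivity)] at hpack
  rw [div_add_one hδ.ne', le_div_iff₀ hδ]
  linarith [min_le_right 1 (2 * (ε + δ / 2))]

lemma norm_unitAddCircle_coe_le (x : ℝ) : ‖(x : UnitAddCircle)‖ ≤ |x| := by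
  simpa [UnitAddCircle.norm_eq] using round_le x 0

lemma norm_nsmul_sub_nsmul_le (n : ℕ) (x y : ℝ) :
    ‖n • (x : UnitAddCircle) - n • (y : UnitAddCircle)‖ ≤ n * |x - y| := by
  rw [← nsmul_sub, ← AddCircle.coe_sub]
  exact norm_nsmul_le.trans (by gcongr; exact norm_unitAddCircle_coe_le _)

lemma addOrderOf_unitAddCircle_ratCast (r : ℚ) : addOrderOf ((r : ℝ) : UnitAddCircle) = r.den := by
  simpa using AddCircle.addOrderOf_coe_rat (p := (1 : ℝ)) (q := r)

lemma one_le_den_mul_norm_nsmul_ratCast (r : ℚ) {m : ℕ} (hm : 0 < m) (hmr : m < r.den) :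
    1 ≤ r.den * ‖m • ((r : ℝ) : UnitAddCircle)‖ := by
  set x : UnitAddCircle := ((r : ℝ) : UnitAddCircle)
  have hx : addOrderOf x = r.den := addOrderOf_unitAddCircle_ratCast r
  have hfin : IsOfFinAddOrder (m • x) := (addOrderOf_pos_iff.1 (hx ▸ r.den_pos)).nsmul
  have hne : m • x ≠ 0 := fun h0 ↦
    hmr.not_ge (Nat.le_of_dvd hm (hx ▸ addOrderOf_dvd_of_nsmul_eq_zero h0))
  have hord : addOrderOf (m • x) ≤ r.den :=
    Nat.le_of_dvd r.den_pos (hx ▸ addOrderOf_smul_dvd m)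
  calc (1 : ℝ) ≤ addOrderOf (m • x) • ‖m • x‖ :=
        AddCircle.le_add_order_smul_norm_of_isOfFinAddOrder hfin hne
    _ ≤ r.den * ‖m • x‖ := by rw [nsmul_eq_mul]; gcongr

variable {α : ℝ} {r : ℚ}

lemma norm_den_nsmul_le (α : ℝ) (r : ℚ) : ‖r.den • (α : UnitAddCircle)‖ ≤ r.den * |α - r| := by
  have hr : r.den • ((r : ℝ) : UnitAddCircle) = 0 := by
    rw [← addOrderOf_unitAddCircle_ratCast r, addOrderOf_nsmul_eq_zero]
  simpa [hr] using norm_nsmul_sub_nsmul_le r.den α r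

lemma one_div_two_mul_den_le_norm_nsmul (hr : |α - r| ≤ 1 / r.den ^ 2) {m : ℕ} (hm : 0 < m)
    (hmr : 2 * m ≤ r.den) : 1 / (2 * r.den) ≤ ‖m • (α : UnitAddCircle)‖ := by
  have hden : (0 : ℝ) < r.den := mod_cast r.den_pos
  have hmr' : 2 * (m : ℝ) ≤ r.den := mod_cast hmr
  have hrat : 1 / r.den ≤ ‖m • ((r : ℝ) : UnitAddCircle)‖ := by
    rw [div_le_iff₀' hden]
    exact one_le_den_mul_norm_nsmul_ratCast r hm (by lia)
  have herr : ‖m • (α : UnitAddCircle) - m • ((r : ℝ) : UnitAddCircle)‖ ≤ 1 / (2 * r.den) :=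
    calc _ ≤ m * |α - r| := norm_nsmul_sub_nsmul_le m α r
      _ ≤ r.den / 2 * (1 / r.den ^ 2) := by gcongr; linarith
      _ = 1 / (2 * r.den) := by field_simp
  have htri := norm_le_norm_add_norm_sub (m • (α : UnitAddCircle)) (m • ((r : ℝ) : UnitAddCircle))
  have hhalf : (1 : ℝ) / r.den = 1 / (2 * r.den) + 1 / (2 * r.den) := by field_simp; norm_num
  linarith

lemma card_filter_two_mul_div_den_le (hr : |α - r| ≤ 1 / r.den ^ 2) (hε : 0 ≤ ε) (b : ℕ) :
    #{n ∈ returnTimes (α : UnitAddCircle) N ε | 2 * n / r.den = b} ≤ 4 * r.den * ε + 1 := by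
  set s := {n ∈ returnTimes (α : UnitAddCircle) N ε | 2 * n / r.den = b}
  have hden : (1 : ℝ) ≤ r.den := mod_cast r.den_pos
  have separated_of_lt : ∀ m ∈ s, ∀ n ∈ s, m < n →
      1 / (2 * r.den) ≤ ‖n • (α : UnitAddCircle) - m • (α : UnitAddCircle)‖ := by
    intro m hm n hn hmn
    rw [sub_eq_add_neg, ← sub_nsmul _ hmn.le]
    refine one_div_two_mul_den_le_norm_nsmul hr (Nat.sub_pos_of_lt hmn) ?_
    have hm_div := (Finset.mem_filter.1 hm).2 ▸ Nat.div_add_mod (2 * m) r.den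
    have hn_div := (Finset.mem_filter.1 hn).2 ▸ Nat.div_add_mod (2 * n) r.den
    have hn_mod := Nat.mod_lt (2 * n) r.den_pos
    lia
  have separated : (s : Set ℕ).Pairwise fun m n ↦
      1 / (2 * r.den) ≤ ‖m • (α : UnitAddCircle) - n • (α : UnitAddCircle)‖ := by
    intro m hm n hn hmn
    rcases hmn.lt_or_gt with h | h
    · rw [norm_sub_rev]
      exact separated_of_lt m hm n hn h
    · exact separated_of_lt n hn m hm h
  have hcard := card_le_of_separated_unitAddCircle (by positivity)
    ((div_le_one (by positivity)).2 (by linarith)) hε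
    (fun n hn ↦ (mem_returnTimes.1 (Finset.mem_filter.1 hn).1).2) separated
  rwa [show 2 * ε / (1 / (2 * r.den)) = 4 * r.den * ε by field_simp; ring] at hcard

theorem card_returnTimes_le (hr : |α - r| ≤ 1 / r.den ^ 2) (hε : 0 ≤ ε) (N : ℕ) :
    #(returnTimes (α : UnitAddCircle) N ε)
      ≤ ((2 * N / r.den : ℕ) + 1) * (4 * r.den * ε + 1) := by
  have maps_to : ∀ n ∈ returnTimes (α : UnitAddCircle) N ε,
      2 * n / r.den ∈ Finset.range (2 * N / r.den + 1) := fun n hn ↦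
    Finset.mem_range_succ_iff.2
      (Nat.div_le_div_right (Nat.mul_le_mul_left 2 (mem_returnTimes.1 hn).1.2))
  rw [Finset.card_eq_sum_card_fiberwise maps_to, Nat.cast_sum]
  simpa only [Finset.card_range, nsmul_eq_mul, Nat.cast_add_one] using
    Finset.sum_le_card_nsmul (Finset.range (2 * N / r.den + 1)) _ _ fun b _ ↦
      card_filter_two_mul_div_den_le (N := N) hr hε b

lemma card_returnTimes_le_of_lt_den (hr : |α - r| ≤ 1 / r.den ^ 2) (hN : N < r.den)
    (hεN : 1 / 2 < ε * N) : #(returnTimes (α : UnitAddCircle) N ε) ≤ 12 * (ε * r.den) := by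
  have hε : 0 < ε := pos_of_mul_pos_left (by linarith) N.cast_nonneg
  have hNr : (N : ℝ) < r.den := mod_cast hN
  have hwindows : 2 * N / r.den ≤ 1 := Nat.le_of_lt_succ (Nat.div_lt_of_lt_mul (by lia))
  have hεr : 1 / 2 < ε * r.den := hεN.trans (by gcongr)
  calc (#(returnTimes (α : UnitAddCircle) N ε) : ℝ)
      ≤ ((2 * N / r.den : ℕ) + 1) * (4 * r.den * ε + 1) := card_returnTimes_le hr hε.le N
    _ ≤ (1 + 1) * (4 * r.den * ε + 1) := by gcongr; exact_mod_cast hwindows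
    _ ≤ 12 * (ε * r.den) := by linarith

lemma card_returnTimes_le_of_den_le (hr : |α - r| ≤ 1 / r.den ^ 2) (hN : r.den ≤ N) (hε : 0 ≤ ε) :
    #(returnTimes (α : UnitAddCircle) N ε) ≤ 12 * (ε * N) + 6 * (N / (2 * r.den)) := by
  have hden : (0 : ℝ) < r.den := mod_cast r.den_pos
  have hwindows : ((2 * N / r.den : ℕ) : ℝ) ≤ 2 * N / r.den := by
    exact_mod_cast Nat.cast_div_le (α := ℝ) (m := 2 * N) (n := r.den)
  have hone : (1 : ℝ) ≤ N / r.den := (one_le_div hden).2 (mod_cast hN)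
  calc (#(returnTimes (α : UnitAddCircle) N ε) : ℝ)
      ≤ ((2 * N / r.den : ℕ) + 1) * (4 * r.den * ε + 1) := card_returnTimes_le hr hε N
    _ ≤ (2 * N / r.den + N / r.den) * (4 * r.den * ε + 1) := by gcongr
    _ = 12 * (ε * N) + 6 * (N / (2 * r.den)) := by field_simp; ring

theorem card_returnTimes_le_mul_max {r' : ℚ} (hr : |α - r| ≤ 1 / r.den ^ 2)
    (hr' : |α - r'| ≤ 1 / r'.den ^ 2) (hN : r.den ≤ N) (hN' : N < r'.den) (hεN : 1 / 2 < ε * N) :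
    #(returnTimes (α : UnitAddCircle) N ε)
      ≤ 18 * max (ε * N) (min (ε * r'.den) (N / (2 * r.den))) := by
  have hε : 0 < ε := pos_of_mul_pos_left (by linarith) N.cast_nonneg
  have hupper := card_returnTimes_le_of_den_le hr hN hε.le
  have hupper' := card_returnTimes_le_of_lt_den hr' hN' hεN
  have hmax := le_max_left (ε * N) (min (ε * r'.den) (N / (2 * r.den)))
  have hmax' := le_max_right (ε * N) (min (ε * r'.den) (N / (2 * r.den)))
  rcases min_choice (ε * r'.den) (N / (2 * r.den)) with h | h <;> rw [h] at hmax hmax' ⊢ <;>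
    linarith

end Circle

section Convergents

lemma exists_intCast_contsAux {K : Type*} [Field K] [LinearOrder K] [IsStrictOrderedRing K]
    [FloorRing K] (v : K) (n : ℕ) : ∃ a b : ℤ, (GenContFract.of v).contsAux n = ⟨a, b⟩ := by
  induction n using Nat.twoStepInduction with
  | zero => exact ⟨1, 0, by simp⟩
  | one => exact ⟨⌊v⌋, 1, by simp⟩
  | more n ih ih' =>
    obtain ⟨a, b, hab⟩ := ih
    obtain ⟨a', b', hab'⟩ := ih'
    by_cases hn : (GenContFract.of v).TerminatedAt n
    · exact ⟨a', b', (GenContFract.contsAux_stable_step_of_terminated hn).trans hab'⟩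
    · obtain ⟨gp, hgp⟩ := Option.ne_none_iff_exists'.1 hn
      obtain ⟨hgpa, z, hgpb⟩ := GenContFract.of_partNum_eq_one_and_exists_int_partDen_eq hgp
      refine ⟨z * a' + a, z * b' + b, ?_⟩
      rw [GenContFract.contsAux_recurrence hgp hab hab', hgpa, hgpb]
      push_cast
      simp only [one_mul]

lemma isCoprime_of_mul_sub_mul_eq_neg_one_pow {R : Type*} [CommRing R] {a b a' b' : R} {n : ℕ}
    (h : a * b' - b * a' = (-1) ^ n) : IsCoprime a b := by
  have hsq : (-1 : R) ^ n * (-1) ^ n = 1 := by rw [← mul_pow]; simp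
  exact ⟨(-1) ^ n * b', -(-1) ^ n * a', by linear_combination (-1) ^ n * h + hsq⟩

lemma natCast_den_convergent {α : ℝ} {k : ℕ} (hk : ¬ (GenContFract.of α).TerminatedAt k) :
    ((α.convergent k).den : ℝ) = (GenContFract.of α).dens k := by
  obtain ⟨a, b, hab⟩ := exists_intCast_contsAux α (k + 1)
  obtain ⟨a', b', hab'⟩ := exists_intCast_contsAux α (k + 2)
  have hnum : (GenContFract.of α).nums k = a := congrArg GenContFract.Pair.a hab
  have hden : (GenContFract.of α).dens k = b := congrArg GenContFract.Pair.b hab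
  have hnum' : (GenContFract.of α).nums (k + 1) = a' := congrArg GenContFract.Pair.a hab'
  have hden' : (GenContFract.of α).dens (k + 1) = b' := congrArg GenContFract.Pair.b hab'
  have hpos : 0 < b := by
    have hfib := GenContFract.succ_nth_fib_le_of_nth_den (v := α) (n := k)
      (Or.inr (mt (GenContFract.terminated_stable (Nat.sub_le k 1)) hk))
    have hfib_pos : (0 : ℝ) < Nat.fib (k + 1) := mod_cast Nat.fib_pos.2 k.succ_pos
    rw [hden] at hfib
    exact_mod_cast hfib_pos.trans_le hfib
  have hdet : a * b' - b * a' = (-1) ^ (k + 1) := by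
    have := (SimpContFract.of α).determinant hk
    change (GenContFract.of α).nums k * (GenContFract.of α).dens (k + 1) -
      (GenContFract.of α).dens k * (GenContFract.of α).nums (k + 1) = _ at this
    rw [hnum, hden, hnum', hden'] at this
    exact_mod_cast this
  have hcop : a.natAbs.Coprime b.natAbs :=
    Int.isCoprime_iff_gcd_eq_one.1 (isCoprime_of_mul_sub_mul_eq_neg_one_pow hdet)
  have hconv : α.convergent k = a / b := by
    have := Real.convs_eq_convergent α k
    rw [GenContFract.conv_eq_num_div_den, hnum, hden] at this
    exact_mod_cast this.symm
  rw [hconv, hden]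
  exact_mod_cast Rat.den_div_eq_of_coprime hpos hcop

variable {α : ℝ}

lemma not_terminatedAt_of_irrational (hα : Irrational α) (n : ℕ) :
    ¬ (GenContFract.of α).TerminatedAt n := fun hn ↦ by
  obtain ⟨r, hr⟩ := (GenContFract.terminates_iff_rat α).1 ⟨n, hn⟩
  exact hα.ne_rat r hr

lemma dens_eq_den_convergent (hα : Irrational α) (k : ℕ) :
    (GenContFract.of α).dens k = (α.convergent k).den :=
  (natCast_den_convergent (not_terminatedAt_of_irrational hα k)).symm

lemma abs_sub_convergent_lt (hα : Irrational α) (k : ℕ) :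
    |α - α.convergent k| < 1 / ((α.convergent k).den * (α.convergent (k + 1)).den) := by
  have hle := GenContFract.abs_sub_convs_le (not_terminatedAt_of_irrational hα k)
  rw [Real.convs_eq_convergent, dens_eq_den_convergent hα, dens_eq_den_convergent hα] at hle
  refine hle.lt_of_ne fun heq ↦ ?_
  have hirr := hα.sub_ratCast (α.convergent k)
  obtain h | h := abs_choice (α - α.convergent k)
  · exact hirr.ne_rat (1 / ((α.convergent k).den * (α.convergent (k + 1)).den))
      (by rw [← h, heq]; push_cast; rfl)
  · exact hirr.neg.ne_rat (1 / ((α.convergent k).den * (α.convergent (k + 1)).den))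
      (by rw [← h, heq]; push_cast; rfl)

lemma abs_sub_convergent_le_one_div_sq (hα : Irrational α) (k : ℕ) :
    |α - α.convergent k| ≤ 1 / (α.convergent k).den ^ 2 := by
  have hmono := GenContFract.of_den_mono (v := α) (n := k)
  rw [dens_eq_den_convergent hα, dens_eq_den_convergent hα] at hmono
  refine (abs_sub_convergent_lt hα k).le.trans ?_
  rw [sq]
  gcongr

lemma den_succ_mul_norm_den_nsmul_lt_one (hα : Irrational α) (k : ℕ) :
    (α.convergent (k + 1)).den * ‖(α.convergent k).den • (α : UnitAddCircle)‖ < 1 := by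
  have happrox := abs_sub_convergent_lt hα k
  rw [lt_div_iff₀' (by positivity)] at happrox
  calc _ ≤ (α.convergent (k + 1)).den * ((α.convergent k).den * |α - α.convergent k|) := by
        gcongr; exact norm_den_nsmul_le α _
    _ = (α.convergent k).den * (α.convergent (k + 1)).den * |α - α.convergent k| := by ring
    _ < 1 := happrox

theorem floor_max_le_card_returnTimes (hα : Irrational α) {ε : ℝ} (hε : 0 < ε) (hε1 : ε ≤ 1)
    (N k : ℕ) :
    ⌊max (ε * N) (min (ε * (α.convergent (k + 1)).den) (N / (2 * (α.convergent k).den)))⌋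
      ≤ (#(returnTimes (α : UnitAddCircle) N ε) : ℤ) := by
  rw [Int.floor_mono.map_max]
  refine max_le (floor_mul_le_card_returnTimes _ N hε hε1) ((Int.floor_mono ?_).trans
    (floor_min_le_card_returnTimes hε (α.convergent k).den_pos (Nat.cast_nonneg _)
      (den_succ_mul_norm_den_nsmul_lt_one hα k)))
  gcongr
  linarith

end Convergents

lemma nid_eq_norm (x : ℝ) : nid x = ‖(x : UnitAddCircle)‖ :=
  UnitAddCircle.norm_eq.symm

lemma setOf_nid_eq_returnTimes (α : ℝ) (N : ℕ) (ε : ℝ) :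
    {n : ℕ | 1 ≤ n ∧ n ≤ N ∧ nid (n * α) < ε} = returnTimes (α : UnitAddCircle) N ε := by
  ext n
  simp only [Set.mem_ofPred_eq, SetLike.mem_coe, mem_returnTimes, nid_eq_norm, ← nsmul_eq_mul,
    AddCircle.coe_nsmul, and_assoc]

theorem stmt_1_general (α : ℝ) (hα : Irrational α) (N : ℕ) (ε : ℝ)
    (q : ℕ → ℝ) (hq : ∀ k, q k = (GenContFract.of α).dens k)
    (h1 : 1 / (N : ℝ) < 2 * ε) (hε1 : ε ≤ 1)
    (K : ℕ) (hK : q K ≤ (N : ℝ)) (hK' : (N : ℝ) < q (K + 1))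
    (M : ℝ) (hM : M = max (ε * N) (min (ε * q (K + 1)) ((N : ℝ) / (2 * q K)))) :
    (⌊M⌋ : ℤ) ≤ ({n : ℕ | 1 ≤ n ∧ n ≤ N ∧ nid (n * α) < ε}.ncard : ℤ) ∧
      ({n : ℕ | 1 ≤ n ∧ n ≤ N ∧ nid (n * α) < ε}.ncard : ℝ) ≤ 18 * M := by
  have hqden : ∀ k, q k = (α.convergent k).den := fun k ↦
    (hq k).trans (dens_eq_den_convergent hα k)
  rw [hqden] at hK hK'
  have hN : 0 < N := (α.convergent K).den_pos.trans_le (mod_cast hK)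
  have hε : 0 < ε := by linarith [show 0 ≤ 1 / (N : ℝ) by positivity]
  have hεN : 1 / 2 < ε * N := by
    rw [div_lt_iff₀ (by positivity)] at h1
    linarith
  rw [setOf_nid_eq_returnTimes, Set.ncard_coe_finset, hM, hqden, hqden]
  exact ⟨floor_max_le_card_returnTimes hα hε hε1 N K,
    card_returnTimes_le_mul_max (abs_sub_convergent_le_one_div_sq hα K)
      (abs_sub_convergent_le_one_div_sq hα (K + 1)) (mod_cast hK) (mod_cast hK') hεN⟩

/-- Let α be irrational with continued fraction convergent denominators
`q_k`. If `1/N < 2ε < ‖q_2 α‖`, `q_K ≤ N < q_{K+1}` and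
`M = max(εN, min(ε q_{K+1}, N/(2 q_K)))`, then `⌊M⌋ ≤ #{n ≤ N : ‖nα‖ < ε} ≤ 32 M`. -/
theorem stmt_1 (α : ℝ) (hα : Irrational α) (N : ℕ) (hN : 1 ≤ N) (ε : ℝ) (hε : 0 < ε)
    (q : ℕ → ℝ) (hq : ∀ k, q k = (GenContFract.of α).dens k)
    (h1 : 1 / (N : ℝ) < 2 * ε) (h2 : 2 * ε < nid (q 2 * α))
    (K : ℕ) (hK : q K ≤ (N : ℝ)) (hK' : (N : ℝ) < q (K + 1))
    (M : ℝ) (hM : M = max (ε * N) (min (ε * q (K + 1)) ((N : ℝ) / (2 * q K)))) :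
    (⌊M⌋ : ℤ) ≤ ({n : ℕ | 1 ≤ n ∧ n ≤ N ∧ nid (n * α) < ε}.ncard : ℤ) ∧
      ({n : ℕ | 1 ≤ n ∧ n ≤ N ∧ nid (n * α) < ε}.ncard : ℝ) ≤ 32 * M := by
  have hε1 : ε ≤ 1 := by linarith [show nid (q 2 * α) ≤ 1 / 2 from abs_sub_round _]
  obtain ⟨hlower, hupper⟩ := stmt_1_general α hα N ε q hq h1 hε1 K hK hK' M hM
  exact ⟨hlower, hupper.trans (by linarith [(Nat.cast_nonneg _).trans hupper])⟩
end

section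
/- Let α ∈ Bad (badly approximable), i.e. inf_{n≥1} n‖nα‖ > 0, and let b ≥ 300. Then there exist absolute constants c₂ > c₁ > 0 and a constant K = K(α,b) > 0 such that for all N ∈ ℕ, all γ ∈ ℝ, and all ε ≥ K/N with ε ≤ 1/2: c₁ N ε ≤ #{n ≤ N : ε/b ≤ ‖nα − γ‖ < ε} ≤ c₂ N ε. -/
/-!
If `r = p / q` is a reduced fraction with `|α - r| ≤ 1 / q ^ 2`, then over any `q` consecutive `n`
the points `n * α` are, up to a common rotation, within `1 / q` of the `q` equally spaced points
`k / q`, each used once; hence an arc of length `ℓ` is visited `q * ℓ` times up to an error of `3`.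
Dirichlet's theorem provides such an `r` with `q ≤ N`, and bad approximability forces `q` to be at
least of order `N`, so that `N` consecutive integers split into boundedly many such blocks.
The condition `ε / b ≤ ‖n * α - γ‖ < ε` contains an arc of length `ε - ε / b` and is contained in an
arc of length `2 * ε`.
-/

open Finset

/-- The number of visits, at times `n ∈ s`, of the orbit `n * α` modulo one to the half-open arc
`[x, x + ℓ)` of the circle. The arc is encoded by `Int.fract (y - x) < ℓ`, so it is empty for
`ℓ ≤ 0` and the whole circle for `1 ≤ ℓ`. -/
noncomputable def arcVisits (α x ℓ : ℝ) (s : Finset ℕ) : ℕ :=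
  #(s.filter fun n : ℕ ↦ Int.fract (n * α - x) < ℓ)

section Counting

theorem card_filter_comp_of_injOn {ι β : Type*} [Fintype β] {s : Finset ι} {f : ι → β}
    (hf : Set.InjOn f s) (hs : #s = Fintype.card β) (P : β → Prop) [DecidablePred P] :
    #{i ∈ s | P (f i)} = #{b | P b} := by
  classical
  have himage : s.image f = univ :=
    eq_univ_of_card _ ((card_image_of_injOn hf).trans hs)
  rw [← himage, filter_image, card_image_of_injOn (hf.mono (filter_subset _ s))]

theorem intCast_zmod_injOn_Ico (q : ℕ) (m : ℤ) :
    Set.InjOn (Int.cast : ℤ → ZMod q) (Ico m (m + q)) := by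
  intro a ha b hb hab
  rw [mem_coe, mem_Ico] at ha hb
  have hdvd := (ZMod.intCast_eq_intCast_iff_dvd_sub a b q).mp hab
  have := Int.eq_zero_of_abs_lt_dvd hdvd (by rw [abs_lt]; constructor <;> omega)
  omega

theorem natCast_mul_unit_zmod_injOn_Ico {q : ℕ} {u : ZMod q} (hu : IsUnit u) (m : ℕ) :
    Set.InjOn (fun n : ℕ ↦ (n : ZMod q) * u) (Ico m (m + q)) := fun _ ha _ hb hab ↦
  Nat.mod_injOn_Ico m q ha hb ((ZMod.natCast_eq_natCast_iff' _ _ q).mp (hu.mul_left_injective hab))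

end Counting

section FloorRing

variable {R : Type*} [CommRing R] [LinearOrder R] [IsStrictOrderedRing R] [FloorRing R]

theorem card_Ico_ceil_le {a b : R} (hab : a ≤ b) : (#(Ico ⌈a⌉ ⌈b⌉) : R) ≤ b - a + 1 := by
  have hcard : (#(Ico ⌈a⌉ ⌈b⌉) : R) = ⌈b⌉ - ⌈a⌉ := by
    exact_mod_cast Int.card_Ico_of_le _ _ (Int.ceil_mono hab)
  linarith [Int.le_ceil a, Int.ceil_lt_add_one b]

theorem le_card_Ico_ceil (a b : R) : b - a - 1 ≤ (#(Ico ⌈a⌉ ⌈b⌉) : R) := by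
  have hcard : (⌈b⌉ - ⌈a⌉ : R) ≤ #(Ico ⌈a⌉ ⌈b⌉) := by
    rw [Int.card_Ico]
    exact_mod_cast Int.self_le_toNat _
  linarith [Int.le_ceil b, Int.ceil_lt_add_one a]

theorem fract_add_lt_of_abs_sub_le {y z ℓ η : R} (hyz : |y - z| ≤ η) (hy : Int.fract y < ℓ) :
    Int.fract (z + η) < ℓ + 2 * η := by
  obtain ⟨hlower, hupper⟩ := abs_le.mp hyz
  have hshift : Int.fract (z - y + η) ≤ z - y + η := by
    have : (0 : R) ≤ ⌊z - y + η⌋ := by exact_mod_cast Int.floor_nonneg.mpr (by linarith)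
    linarith [Int.self_sub_floor (z - y + η)]
  calc Int.fract (z + η) = Int.fract (y + (z - y + η)) := by congr 1; ring
    _ ≤ Int.fract y + Int.fract (z - y + η) := Int.fract_add_le _ _
    _ < ℓ + 2 * η := by linarith

end FloorRing

section EquallySpaced

variable {q : ℕ} [NeZero q]

theorem fract_zmod_val_div_sub (k : ℤ) (x : ℝ) :
    Int.fract ((k : ZMod q).val / q - x : ℝ) = Int.fract (k / q - x) := by
  have hq : (q : ℝ) ≠ 0 := NeZero.ne _
  have hval : (((k : ZMod q).val : ℤ) : ℝ) + (q : ℝ) * ((k / q : ℤ) : ℝ) = k := by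
    rw [ZMod.val_intCast]
    exact_mod_cast Int.emod_add_mul_ediv k q
  rw [← Int.fract_add_intCast _ (k / q), ← hval, Int.cast_natCast]
  congr 1
  field_simp
  ring

theorem card_zmod_fract_lt_eq (x ℓ : ℝ) :
    #{a : ZMod q | Int.fract (a.val / q - x) < ℓ} =
      #{k ∈ Ico ⌈q * x⌉ (⌈q * x⌉ + q) | k < ⌈q * (x + ℓ)⌉} := by
  have hq : (0 : ℝ) < q := Nat.cast_pos.mpr (NeZero.pos q)
  rw [← card_filter_comp_of_injOn (intCast_zmod_injOn_Ico q ⌈q * x⌉) (by simp [ZMod.card])]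
  refine congrArg card (filter_congr fun k hk ↦ ?_)
  obtain ⟨hk₁, hk₂⟩ := mem_Ico.mp hk
  have hk_lower : x ≤ k / q := (le_div_iff₀' hq).mpr (Int.ceil_le.mp hk₁)
  have hk_upper : k / q < x + 1 := by
    have : (k : ℝ) < ⌈q * x⌉ + q := by exact_mod_cast hk₂
    have : k - q < q * x := by exact_mod_cast Int.lt_ceil.mp (by omega : k - q < ⌈q * x⌉)
    rw [div_lt_iff₀' hq]
    linarith
  rw [fract_zmod_val_div_sub, Int.fract_eq_self.mpr ⟨by linarith, by linarith⟩, Int.lt_ceil,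
    sub_lt_iff_lt_add', div_lt_iff₀' hq]

theorem card_zmod_fract_lt_le (x : ℝ) {ℓ : ℝ} (hℓ : 0 ≤ ℓ) :
    (#{a : ZMod q | Int.fract (a.val / q - x) < ℓ} : ℝ) ≤ q * ℓ + 1 := by
  have hsub : {k ∈ Ico ⌈q * x⌉ (⌈q * x⌉ + q) | k < ⌈q * (x + ℓ)⌉} ⊆
      Ico ⌈q * x⌉ ⌈q * (x + ℓ)⌉ := fun k hk ↦ by
    rw [mem_filter, mem_Ico] at hk
    exact mem_Ico.mpr ⟨hk.1.1, hk.2⟩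
  rw [card_zmod_fract_lt_eq]
  calc _ ≤ (#(Ico ⌈q * x⌉ ⌈q * (x + ℓ)⌉) : ℝ) := by exact_mod_cast card_le_card hsub
    _ ≤ q * (x + ℓ) - q * x + 1 := card_Ico_ceil_le (by gcongr; linarith)
    _ = q * ℓ + 1 := by ring

theorem le_card_zmod_fract_lt (x : ℝ) {ℓ : ℝ} (hℓ : ℓ ≤ 1) :
    q * ℓ - 1 ≤ (#{a : ZMod q | Int.fract (a.val / q - x) < ℓ} : ℝ) := by
  have hceil : ⌈q * (x + ℓ)⌉ ≤ ⌈q * x⌉ + q := by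
    rw [← Int.ceil_add_natCast]
    exact Int.ceil_mono (by nlinarith [(Nat.cast_nonneg q : (0 : ℝ) ≤ q)])
  have hsub : Ico ⌈q * x⌉ ⌈q * (x + ℓ)⌉ ⊆
      {k ∈ Ico ⌈q * x⌉ (⌈q * x⌉ + q) | k < ⌈q * (x + ℓ)⌉} := fun k hk ↦ by
    rw [mem_Ico] at hk
    exact mem_filter.mpr ⟨mem_Ico.mpr ⟨hk.1, hk.2.trans_le hceil⟩, hk.2⟩
  rw [card_zmod_fract_lt_eq]
  calc q * ℓ - 1 = q * (x + ℓ) - q * x - 1 := by ring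
    _ ≤ #(Ico ⌈q * x⌉ ⌈q * (x + ℓ)⌉) := le_card_Ico_ceil _ _
    _ ≤ _ := by exact_mod_cast card_le_card hsub

end EquallySpaced

section ArcVisits

theorem arcVisits_mono (α x ℓ : ℝ) {s t : Finset ℕ} (hst : s ⊆ t) :
    arcVisits α x ℓ s ≤ arcVisits α x ℓ t :=
  card_le_card (filter_subset_filter _ hst)

theorem arcVisits_Ico_add (α x ℓ : ℝ) {a b c : ℕ} (hab : a ≤ b) (hbc : b ≤ c) :
    arcVisits α x ℓ (Ico a b) + arcVisits α x ℓ (Ico b c) = arcVisits α x ℓ (Ico a c) := by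
  simp only [arcVisits, card_filter, sum_Ico_consecutive _ hab hbc]

theorem arcVisits_Ico_mul (α x ℓ : ℝ) (m q s : ℕ) :
    arcVisits α x ℓ (Ico m (m + s * q)) =
      ∑ i ∈ range s, arcVisits α x ℓ (Ico (m + i * q) (m + i * q + q)) := by
  induction s with
  | zero => simp [arcVisits]
  | succ s ih =>
    rw [sum_range_succ, ← ih, arcVisits_Ico_add _ _ _ (by omega) (by omega), Nat.succ_mul,
      ← add_assoc]

instance neZero_rat_den (r : ℚ) : NeZero r.den := ⟨r.den_nz⟩

theorem arcVisits_rat (r : ℚ) (x ℓ : ℝ) (m : ℕ) :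
    arcVisits r x ℓ (Ico m (m + r.den)) =
      #{a : ZMod r.den | Int.fract (a.val / r.den - x) < ℓ} := by
  have hunit : IsUnit (r.num : ZMod r.den) :=
    (ZMod.coe_int_isUnit_iff_isCoprime _ _).mpr (Rat.isCoprime_num_den r).symm
  rw [← card_filter_comp_of_injOn (natCast_mul_unit_zmod_injOn_Ico hunit m) (by simp [ZMod.card])
    fun a ↦ Int.fract (a.val / r.den - x) < ℓ]
  refine congrArg card (filter_congr fun n _ ↦ ?_)
  have hcast : (n * r.num : ZMod r.den) = ((n * r.num : ℤ) : ZMod r.den) := by push_cast; rfl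
  have hreal : (n * r : ℝ) = ((n * r.num : ℤ) : ℝ) / r.den := by
    rw [Rat.cast_def r]
    push_cast
    ring
  rw [hcast, fract_zmod_val_div_sub, hreal]

theorem arcVisits_le_of_abs_sub_le {α β x y η : ℝ} {s : Finset ℕ} (ℓ : ℝ)
    (h : ∀ n ∈ s, |(n * α - x) - (n * β - y)| ≤ η) :
    arcVisits α x ℓ s ≤ arcVisits β (y - η) (ℓ + 2 * η) s := by
  refine card_le_card fun n hn ↦ ?_
  rw [mem_filter] at hn ⊢
  have := fract_add_lt_of_abs_sub_le (h n hn.1) hn.2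
  exact ⟨hn.1, by rwa [sub_add] at this⟩

end ArcVisits

section Block

variable {α : ℝ} {r : ℚ}

theorem abs_mul_sub_mul_rat_le (hr : |α - r| ≤ 1 / (r.den : ℝ) ^ 2) (x : ℝ) {m n : ℕ}
    (hn : n ∈ Ico m (m + r.den)) :
    |(n * α - x) - (n * r - (x - m * (α - r)))| ≤ 1 / r.den := by
  obtain ⟨hmn, hnm⟩ := mem_Ico.mp hn
  have hlower : (0 : ℝ) ≤ n - m := sub_nonneg.mpr (Nat.cast_le.mpr hmn)
  have hupper : (n - m : ℝ) ≤ r.den := by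
    rw [sub_le_iff_le_add']
    exact_mod_cast hnm.le
  calc |(n * α - x) - (n * r - (x - m * (α - r)))| = |(n - m) * (α - r)| := by congr 1; ring
    _ = (n - m) * |α - r| := by rw [abs_mul, abs_of_nonneg hlower]
    _ ≤ r.den * (1 / (r.den : ℝ) ^ 2) := by gcongr
    _ = 1 / r.den := by
      have : (r.den : ℝ) ≠ 0 := Nat.cast_ne_zero.mpr r.den_nz
      field_simp

theorem arcVisits_block_le (hr : |α - r| ≤ 1 / (r.den : ℝ) ^ 2) (x : ℝ) {ℓ : ℝ} (hℓ : 0 ≤ ℓ)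
    (m : ℕ) : (arcVisits α x ℓ (Ico m (m + r.den)) : ℝ) ≤ r.den * ℓ + 3 := by
  have hden : (r.den : ℝ) ≠ 0 := Nat.cast_ne_zero.mpr r.den_nz
  have hcompare := arcVisits_le_of_abs_sub_le ℓ fun n hn ↦
    abs_mul_sub_mul_rat_le hr x (m := m) hn
  rw [arcVisits_rat] at hcompare
  calc _ ≤ _ := Nat.cast_le.mpr hcompare
    _ ≤ r.den * (ℓ + 2 * (1 / r.den)) + 1 := card_zmod_fract_lt_le _ (by positivity)
    _ = r.den * ℓ + 3 := by field_simp; ring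

theorem le_arcVisits_block (hr : |α - r| ≤ 1 / (r.den : ℝ) ^ 2) (x : ℝ) {ℓ : ℝ} (hℓ : ℓ ≤ 1)
    (m : ℕ) : r.den * ℓ - 3 ≤ (arcVisits α x ℓ (Ico m (m + r.den)) : ℝ) := by
  have hden : (r.den : ℝ) ≠ 0 := Nat.cast_ne_zero.mpr r.den_nz
  have hinv : (0 : ℝ) ≤ 1 / r.den := by positivity
  have hcompare := arcVisits_le_of_abs_sub_le (ℓ - 2 * (1 / r.den)) fun n hn ↦
    (abs_sub_comm _ _).trans_le (abs_mul_sub_mul_rat_le hr (x + 1 / r.den) (m := m) hn)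
  rw [arcVisits_rat, add_sub_cancel_right, sub_add_cancel] at hcompare
  calc r.den * ℓ - 3 = r.den * (ℓ - 2 * (1 / r.den)) - 1 := by field_simp; ring
    _ ≤ _ := le_card_zmod_fract_lt _ (by linarith)
    _ ≤ _ := Nat.cast_le.mpr hcompare

theorem arcVisits_window_le (hr : |α - r| ≤ 1 / (r.den : ℝ) ^ 2) (x : ℝ) {ℓ : ℝ}
    (hℓ : 6 ≤ r.den * ℓ) {N : ℕ} (hN : r.den ≤ N) (m : ℕ) :
    (arcVisits α x ℓ (Ico m (m + N)) : ℝ) ≤ 3 * N * ℓ := by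
  have hℓ₀ : 0 < ℓ := pos_of_mul_pos_right (by linarith : 0 < r.den * ℓ) (Nat.cast_nonneg _)
  set s := N / r.den + 1 with hs
  have hcover : N ≤ s * r.den := by
    rw [hs, mul_comm]
    exact (Nat.lt_mul_div_succ N r.pos).le
  have hblocks : (s * r.den : ℝ) ≤ 2 * N := by
    have := Nat.div_mul_le_self N r.den
    exact_mod_cast (by rw [hs, add_one_mul]; omega : s * r.den ≤ 2 * N)
  calc (arcVisits α x ℓ (Ico m (m + N)) : ℝ)
      ≤ arcVisits α x ℓ (Ico m (m + s * r.den)) :=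
        Nat.cast_le.mpr (arcVisits_mono α x ℓ (Ico_subset_Ico_right (by omega)))
    _ = ∑ i ∈ range s, (arcVisits α x ℓ (Ico (m + i * r.den) (m + i * r.den + r.den)) : ℝ) := by
        rw [arcVisits_Ico_mul, Nat.cast_sum]
    _ ≤ ∑ _i ∈ range s, (r.den * ℓ + 3) :=
        sum_le_sum fun _ _ ↦ arcVisits_block_le hr x hℓ₀.le _
    _ = s * (r.den * ℓ + 3) := by rw [sum_const, card_range, nsmul_eq_mul]
    _ ≤ s * (3 / 2 * (r.den * ℓ)) := by gcongr; linarith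
    _ = 3 / 2 * (s * r.den) * ℓ := by ring
    _ ≤ 3 / 2 * (2 * N) * ℓ := by gcongr
    _ = 3 * N * ℓ := by ring

theorem le_arcVisits_window (hr : |α - r| ≤ 1 / (r.den : ℝ) ^ 2) (x : ℝ) {ℓ : ℝ}
    (hℓ : 6 ≤ r.den * ℓ) (hℓ₁ : ℓ ≤ 1) {N : ℕ} (hN : r.den ≤ N) (m : ℕ) :
    N * ℓ / 4 ≤ (arcVisits α x ℓ (Ico m (m + N)) : ℝ) := by
  have hℓ₀ : 0 < ℓ := pos_of_mul_pos_right (by linarith : 0 < r.den * ℓ) (Nat.cast_nonneg _)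
  set s := N / r.den
  have hfit : s * r.den ≤ N := Nat.div_mul_le_self N r.den
  have hblocks : (N : ℝ) ≤ 2 * (s * r.den) := by
    have hlt : N < r.den * (s + 1) := Nat.lt_mul_div_succ N r.pos
    have hone : r.den ≤ s * r.den :=
      Nat.le_mul_of_pos_left _ (Nat.div_pos hN r.pos)
    exact_mod_cast (by linarith : N ≤ 2 * (s * r.den))
  calc N * ℓ / 4 ≤ 2 * (s * r.den) * ℓ / 4 := by gcongr
    _ = s * (r.den * ℓ / 2) := by ring
    _ ≤ s * (r.den * ℓ - 3) := by gcongr; linarith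
    _ = ∑ _i ∈ range s, (r.den * ℓ - 3) := by rw [sum_const, card_range, nsmul_eq_mul]
    _ ≤ ∑ i ∈ range s, (arcVisits α x ℓ (Ico (m + i * r.den) (m + i * r.den + r.den)) : ℝ) :=
        sum_le_sum fun _ _ ↦ le_arcVisits_block hr x hℓ₁ _
    _ = arcVisits α x ℓ (Ico m (m + s * r.den)) := by rw [arcVisits_Ico_mul, Nat.cast_sum]
    _ ≤ arcVisits α x ℓ (Ico m (m + N)) :=
        Nat.cast_le.mpr (arcVisits_mono α x ℓ (Ico_subset_Ico_right (by omega)))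

end Block

section NearestInteger

theorem le_nid_and_nid_lt_of_fract_sub_lt {y δ ε : ℝ} (hδ : 0 ≤ δ) (hε : ε ≤ 1 / 2)
    (hy : Int.fract (y - δ) < ε - δ) : δ ≤ nid y ∧ nid y < ε := by
  have hfract₀ := Int.fract_nonneg (y - δ)
  have hfract : Int.fract y = Int.fract (y - δ) + δ :=
    Int.fract_eq_iff.mpr ⟨by linarith, by linarith, ⌊y - δ⌋, by rw [Int.fract]; ring⟩
  rw [nid, abs_sub_round_eq_min, hfract, min_eq_left (by linarith)]
  constructor <;> linarith

theorem fract_add_lt_of_nid_lt {y ε : ℝ} (hy : nid y < ε) : Int.fract (y + ε) < 2 * ε := by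
  obtain ⟨hlower, hupper⟩ := abs_lt.mp hy
  have hfloor : round y ≤ ⌊y + ε⌋ := Int.le_floor.mpr (by linarith)
  have : (round y : ℝ) ≤ ⌊y + ε⌋ := Int.cast_le.mpr hfloor
  linarith [Int.self_sub_floor (y + ε)]

theorem arcVisits_le_ncard_annulus (α γ : ℝ) {δ ε : ℝ} (hδ : 0 ≤ δ) (hε : ε ≤ 1 / 2) (N : ℕ) :
    arcVisits α (γ + δ) (ε - δ) (Ico 1 (1 + N)) ≤
      {n : ℕ | 1 ≤ n ∧ n ≤ N ∧ δ ≤ nid (n * α - γ) ∧ nid (n * α - γ) < ε}.ncard := by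
  rw [arcVisits, ← Set.ncard_coe_finset]
  refine Set.ncard_le_ncard (fun n hn ↦ ?_) <|
    (Set.finite_Icc 1 N).subset fun _ ⟨hpos, hle, _⟩ ↦ ⟨hpos, hle⟩
  rw [mem_coe, mem_filter, mem_Ico, ← sub_sub] at hn
  exact ⟨hn.1.1, by omega, le_nid_and_nid_lt_of_fract_sub_lt hδ hε hn.2⟩

theorem ncard_annulus_le_arcVisits (α γ δ ε : ℝ) (N : ℕ) :
    {n : ℕ | 1 ≤ n ∧ n ≤ N ∧ δ ≤ nid (n * α - γ) ∧ nid (n * α - γ) < ε}.ncard ≤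
      arcVisits α (γ - ε) (2 * ε) (Ico 1 (1 + N)) := by
  rw [arcVisits, ← Set.ncard_coe_finset]
  refine Set.ncard_le_ncard fun n hn ↦ ?_
  rw [mem_coe, mem_filter, mem_Ico, ← sub_add]
  exact ⟨⟨hn.1, by linarith [hn.2.1]⟩, fract_add_lt_of_nid_lt hn.2.2.2⟩

end NearestInteger

theorem exists_rat_le_den_of_le_mul_nid {c α : ℝ}
    (hα : ∀ n : ℕ, 1 ≤ n → c ≤ (n : ℝ) * nid (n * α)) {N : ℕ} (hN : 0 < N) :
    ∃ r : ℚ, |α - r| ≤ 1 / (r.den : ℝ) ^ 2 ∧ r.den ≤ N ∧ c * (N + 1) ≤ r.den := by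
  obtain ⟨r, happrox, hden⟩ := Real.exists_rat_abs_sub_le_and_den_le α hN
  have hpos : (0 : ℝ) < r.den := Nat.cast_pos.mpr r.pos
  have hle : (r.den : ℝ) ≤ N + 1 := by exact_mod_cast hden.trans N.le_succ
  have hnid : nid (r.den * α) ≤ r.den * |α - r| := by
    calc nid (r.den * α) ≤ |r.den * α - r.num| := round_le _ _
      _ = |r.den * (α - r)| := by
        congr 1
        rw [mul_sub, Rat.cast_def r, mul_div_cancel₀ _ hpos.ne']
      _ = r.den * |α - r| := by rw [abs_mul, abs_of_pos hpos]
  refine ⟨r, happrox.trans ?_, hden, ?_⟩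
  · rw [pow_two]
    gcongr
  · rw [← le_div_iff₀ (by positivity)]
    calc c ≤ r.den * nid (r.den * α) := hα _ r.pos
      _ ≤ r.den * (r.den * (1 / ((N + 1) * r.den))) := by gcongr; exact hnid.trans (by gcongr)
      _ = r.den / (N + 1) := by field_simp

theorem stmt_13_general :
    ∃ c₁ c₂ : ℝ, 0 < c₁ ∧ c₁ < c₂ ∧
      ∀ α : ℝ, (∃ c₀ : ℝ, 0 < c₀ ∧ ∀ n : ℕ, 1 ≤ n → c₀ ≤ (n : ℝ) * nid (n * α)) →
        ∃ K : ℝ, 0 < K ∧ ∀ b : ℝ, 2 ≤ b → ∀ N : ℕ, 1 ≤ N → ∀ γ : ℝ, ∀ ε : ℝ,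
          K / (N : ℝ) ≤ ε → ε ≤ 1 / 2 →
          c₁ * N * ε ≤
              ({n : ℕ | 1 ≤ n ∧ n ≤ N ∧ ε / b ≤ nid (n * α - γ) ∧
                nid (n * α - γ) < ε}.ncard : ℝ) ∧
            ({n : ℕ | 1 ≤ n ∧ n ≤ N ∧ ε / b ≤ nid (n * α - γ) ∧
                nid (n * α - γ) < ε}.ncard : ℝ) ≤ c₂ * N * ε := by
  refine ⟨1 / 8, 6, by norm_num, by norm_num, ?_⟩
  rintro α ⟨c₀, hc₀, hα⟩
  refine ⟨12 / c₀, by positivity, fun b hb N hN γ ε hε hε₁ ↦ ?_⟩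
  have hN₀ : (0 : ℝ) < N := Nat.cast_pos.mpr hN
  have hε₀ : 0 < ε := lt_of_lt_of_le (by positivity) hε
  have hδ : ε / b ≤ ε / 2 := by gcongr
  obtain ⟨r, hr, hden, hlarge⟩ := exists_rat_le_den_of_le_mul_nid hα hN
  have hscale : 12 ≤ r.den * ε := by
    rw [div_div, div_le_iff₀' (by positivity)] at hε
    nlinarith
  have hδ₀ : 0 ≤ ε / b := by positivity
  constructor
  · calc 1 / 8 * N * ε = N * (ε / 2) / 4 := by ring
      _ ≤ N * (ε - ε / b) / 4 := by gcongr; linarith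
      _ ≤ arcVisits α (γ + ε / b) (ε - ε / b) (Ico 1 (1 + N)) :=
        le_arcVisits_window hr _ (by nlinarith) (by linarith) hden 1
      _ ≤ _ := Nat.cast_le.mpr (arcVisits_le_ncard_annulus α γ hδ₀ hε₁ N)
  · calc _ ≤ (arcVisits α (γ - ε) (2 * ε) (Ico 1 (1 + N)) : ℝ) :=
        Nat.cast_le.mpr (ncard_annulus_le_arcVisits α γ (ε / b) ε N)
      _ ≤ 3 * N * (2 * ε) := arcVisits_window_le hr _ (by linarith) hden 1
      _ = 6 * N * ε := by ring

/-- There exist absolute constants `c₂ > c₁ > 0` such that for every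
badly approximable `α` and every `b ≥ 300` there is `K = K(α,b) > 0` with: for all
`N ≥ 1`, all `γ ∈ ℝ` and all `ε` with `K/N ≤ ε ≤ 1/2`,
`c₁ N ε ≤ #{n ≤ N : ε/b ≤ ‖nα − γ‖ < ε} ≤ c₂ N ε`. -/
theorem stmt_13 :
    ∃ c₁ c₂ : ℝ, 0 < c₁ ∧ c₁ < c₂ ∧
      ∀ α : ℝ, (∃ c₀ : ℝ, 0 < c₀ ∧ ∀ n : ℕ, 1 ≤ n → c₀ ≤ (n : ℝ) * nid (n * α)) →
        ∀ b : ℝ, 300 ≤ b →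
          ∃ K : ℝ, 0 < K ∧ ∀ N : ℕ, 1 ≤ N → ∀ γ : ℝ, ∀ ε : ℝ,
            K / (N : ℝ) ≤ ε → ε ≤ 1 / 2 →
            c₁ * N * ε ≤
                ({n : ℕ | 1 ≤ n ∧ n ≤ N ∧ ε / b ≤ nid (n * α - γ) ∧
                  nid (n * α - γ) < ε}.ncard : ℝ) ∧
              ({n : ℕ | 1 ≤ n ∧ n ≤ N ∧ ε / b ≤ nid (n * α - γ) ∧
                  nid (n * α - γ) < ε}.ncard : ℝ) ≤ c₂ * N * ε := by
  obtain ⟨c₁, c₂, hc₁, hc, h⟩ := stmt_13_general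
  exact ⟨c₁, c₂, hc₁, hc, fun α hα b hb ↦ (h α hα).imp fun K hK ↦ ⟨hK.1, hK.2 b (by linarith)⟩⟩
end
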